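/- For every n ≥ 2, there is an injective group homomorphism from the braid group B_n on n strings into GL(n(n−1)/2, ℝ), the group of invertible real matrices of size n(n−1)/2. -/

import Mathlib

/-- The braid relations on `n` strings. -/
def braidRels (n : ℕ) : Set (FreeGroup (Fin (n - 1))) :=
  {r | (∃ i j : Fin (n - 1), (i : ℕ) + 2 ≤ (j : ℕ) ∧
          r = FreeGroup.of i * FreeGroup.of j * (FreeGroup.of i)⁻¹ * (FreeGroup.of j)⁻¹) ∨
       (∃ i j : Fin (n - 1), (j : ℕ) = (i : ℕ) + 1 ∧
          r = FreeGroup.of i * FreeGroup.of j * FreeGroup.of i *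
              (FreeGroup.of j * FreeGroup.of i * FreeGroup.of j)⁻¹)}

/-- The braid group `B_n` on `n` strings. -/
def BraidGroup (n : ℕ) : Type :=
  PresentedGroup (braidRels n)

instance (n : ℕ) : Group (BraidGroup n) := by
  unfold BraidGroup; infer_instance

/-! For `0 < q < 1` the Lawrence-Krammer matrices still make sense at `t = 0`, where their entries
are nonnegative. There is then no cancellation in products, and the vanishing of a single row of the
matrix of a positive braid `x` detects whether `x` is right-divisible by a given generator. If `t`
is transcendental, the matrix of `x` at `t` determines the one at `t = 0`, so two positive braids
with the same matrix have the same generators as right divisors; as the matrices of the generators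
are invertible, an induction on length shows that the representation is faithful on the positive
braid monoid. Finally the full twist is central and is a multiple of every generator, so every braid
is a quotient of positive ones and faithfulness passes to the braid group. -/

/-- A finite family of elements of a monoid satisfying Artin's braid relations. -/
structure IsBraidFamily {M : Type*} [Monoid M] {N : ℕ} (σ : Fin N → M) : Prop where
  commute : ∀ i j : Fin N, (i : ℕ) + 2 ≤ j → Commute (σ i) (σ j)
  braid : ∀ i j : Fin N, (j : ℕ) = i + 1 → σ i * σ j * σ i = σ j * σ i * σ j

namespace BraidGroup

variable {n : ℕ}

/-- The Artin generators of the braid group. -/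
def of (i : Fin (n - 1)) : BraidGroup n :=
  PresentedGroup.of (rels := braidRels n) i

theorem isBraidFamily_of : IsBraidFamily (of (n := n)) where
  commute i j h := by
    have hrel : of i * of j * (of i)⁻¹ * (of j)⁻¹ = 1 :=
      PresentedGroup.one_of_mem (rels := braidRels n) (Or.inl ⟨i, j, h, rfl⟩)
    rwa [mul_inv_eq_one, mul_inv_eq_iff_eq_mul] at hrel
  braid i j h := by
    have hrel : of i * of j * of i * (of j * of i * of j)⁻¹ = 1 :=
      PresentedGroup.one_of_mem (rels := braidRels n) (Or.inr ⟨i, j, h, rfl⟩)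
    exact mul_inv_eq_one.mp hrel

theorem closure_range_of : Subgroup.closure (Set.range (of (n := n))) = ⊤ :=
  PresentedGroup.closure_range_of _

variable {G : Type*} [Group G] {σ : Fin (n - 1) → G}

theorem lift_eq_one_of_mem_braidRels (hσ : IsBraidFamily σ) :
    ∀ r ∈ braidRels n, FreeGroup.lift σ r = 1 := by
  rintro _ (⟨i, j, h, rfl⟩ | ⟨i, j, h, rfl⟩) <;>
    simp only [map_mul, map_inv, FreeGroup.lift_apply_of]
  · rw [mul_inv_eq_one, mul_inv_eq_iff_eq_mul, (hσ.commute i j h).eq]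
  · rw [mul_inv_eq_one, hσ.braid i j h]

/-- The homomorphism out of the braid group determined by a braid family in a group. -/
def lift (hσ : IsBraidFamily σ) : BraidGroup n →* G :=
  PresentedGroup.toGroup (lift_eq_one_of_mem_braidRels hσ)

@[simp]
theorem lift_of (hσ : IsBraidFamily σ) (i : Fin (n - 1)) : lift hσ (of i) = σ i :=
  PresentedGroup.toGroup.of _

end BraidGroup

/-- The relations of the positive braid monoid: Artin's relations between positive words. -/
inductive BraidMonoidRel (n : ℕ) : FreeMonoid (Fin (n - 1)) → FreeMonoid (Fin (n - 1)) → Prop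
  | commute (i j : Fin (n - 1)) (h : (i : ℕ) + 2 ≤ j) :
      BraidMonoidRel n (.of i * .of j) (.of j * .of i)
  | braid (i j : Fin (n - 1)) (h : (j : ℕ) = i + 1) :
      BraidMonoidRel n (.of i * .of j * .of i) (.of j * .of i * .of j)

/-- The positive braid monoid `B_n⁺` on `n` strings. Unlike `B_n`, it acts through the
Lawrence-Krammer operators at the non-invertible parameter `t = 0`. -/
def BraidMonoid (n : ℕ) : Type :=
  PresentedMonoid (BraidMonoidRel n)

namespace BraidMonoid

variable {n : ℕ}

instance : Monoid (BraidMonoid n) :=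
  inferInstanceAs (Monoid (PresentedMonoid (BraidMonoidRel n)))

/-- The Artin generators of the braid monoid. -/
def of (i : Fin (n - 1)) : BraidMonoid n :=
  PresentedMonoid.of (BraidMonoidRel n) i

theorem isBraidFamily_of : IsBraidFamily (of (n := n)) where
  commute i j h := PresentedMonoid.mk_eq_mk_of_rel (.commute i j h)
  braid i j h := PresentedMonoid.mk_eq_mk_of_rel (.braid i j h)

theorem commute_of {i j : Fin (n - 1)} (h : (i : ℕ) + 2 ≤ j ∨ (j : ℕ) + 2 ≤ i) :
    Commute (of i) (of j) :=
  h.elim (isBraidFamily_of.commute i j) fun h ↦ (isBraidFamily_of.commute j i h).symm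

theorem braid_of {i j : Fin (n - 1)} (h : (j : ℕ) = i + 1 ∨ (i : ℕ) = j + 1) :
    of i * of j * of i = of j * of i * of j :=
  h.elim (isBraidFamily_of.braid i j) fun h ↦ (isBraidFamily_of.braid j i h).symm

@[elab_as_elim]
theorem induction_on_right {motive : BraidMonoid n → Prop} (x : BraidMonoid n) (one : motive 1)
    (mul_of : ∀ x i, motive x → motive (x * of i)) : motive x := by
  refine Submonoid.induction_of_closure_eq_top_right
    (PresentedMonoid.closure_range_of (BraidMonoidRel n)) x one ?_
  rintro x _ ⟨i, rfl⟩ hx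
  exact mul_of x i hx

variable {M : Type*} [Monoid M] {σ : Fin (n - 1) → M}

/-- The homomorphism out of the braid monoid determined by a braid family. -/
def lift (hσ : IsBraidFamily σ) : BraidMonoid n →* M :=
  PresentedMonoid.lift σ fun _ _ h ↦ by
    cases h with
    | commute i j h => simpa using (hσ.commute i j h).eq
    | braid i j h => simpa using hσ.braid i j h

@[simp]
theorem lift_of (hσ : IsBraidFamily σ) (i : Fin (n - 1)) : lift hσ (of i) = σ i :=
  rfl

/-- The word length, which is well defined because the braid relations are homogeneous. -/
def length (x : BraidMonoid n) : ℕ :=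
  (lift (σ := fun _ ↦ Multiplicative.ofAdd 1) ⟨fun _ _ _ ↦ rfl, fun _ _ _ ↦ rfl⟩ x).toAdd

theorem length_mul_of (x : BraidMonoid n) (i : Fin (n - 1)) :
    (x * of i).length = x.length + 1 := by
  simp [length]

/-- The canonical homomorphism from the braid monoid to the braid group. -/
def toBraidGroup : BraidMonoid n →* BraidGroup n :=
  lift BraidGroup.isBraidFamily_of

@[simp]
theorem toBraidGroup_of (i : Fin (n - 1)) : toBraidGroup (of i) = BraidGroup.of i :=
  lift_of _ i

end BraidMonoid

/-- The product `s 0 * s 1 * ⋯ * s (m - 1)`. For the Artin generators this is the Coxeter element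
`δ = σ₁ ⋯ σ_m`, whose power `δ ^ (m + 1)` is the full twist. -/
def coxeterProd {M : Type*} [Monoid M] (s : ℕ → M) (m : ℕ) : M :=
  ((List.range m).map s).prod

section FullTwist

variable {M : Type*} [Monoid M] {s : ℕ → M} {N : ℕ}

theorem coxeterProd_succ (s : ℕ → M) (m : ℕ) : coxeterProd s (m + 1) = coxeterProd s m * s m :=
  List.prod_range_succ s m

theorem coxeterProd_succ' (s : ℕ → M) (m : ℕ) :
    coxeterProd s (m + 1) = s 0 * coxeterProd (fun i ↦ s (i + 1)) m :=
  List.prod_range_succ' s m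

theorem commute_coxeterProd {m : ℕ} {a : M} (h : ∀ i < m, Commute (s i) a) :
    Commute (coxeterProd s m) a := by
  induction m with
  | zero => exact Commute.one_left a
  | succ m ih =>
    rw [coxeterProd_succ]
    exact (ih fun i hi ↦ h i (by omega)).mul_left (h m (by omega))

variable (hcomm : ∀ i j, i + 2 ≤ j → j < N → Commute (s i) (s j))
  (hbraid : ∀ i, i + 1 < N → s i * s (i + 1) * s i = s (i + 1) * s i * s (i + 1))

include hcomm hbraid

theorem semiconjBy_coxeterProd {m i : ℕ} (hi : i + 1 < m) (hm : m ≤ N) :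
    SemiconjBy (coxeterProd s m) (s i) (s (i + 1)) := by
  induction m with
  | zero => omega
  | succ m ih =>
    rcases Nat.lt_or_ge (i + 1) m with him | him
    · rw [coxeterProd_succ]
      exact (ih him (by omega)).mul_left (hcomm i m (by omega) (by omega)).symm
    · obtain rfl : m = i + 1 := by omega
      have hcomm_succ : Commute (coxeterProd s i) (s (i + 1)) :=
        commute_coxeterProd fun j hj ↦ hcomm j (i + 1) (by omega) (by omega)
      have hbraid_semiconj : SemiconjBy (s i * s (i + 1)) (s i) (s (i + 1)) := by
        rw [SemiconjBy, hbraid i (by omega), mul_assoc]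
      rw [coxeterProd_succ, coxeterProd_succ, mul_assoc]
      exact SemiconjBy.mul_left hcomm_succ hbraid_semiconj

theorem semiconjBy_coxeterProd_pow {p i : ℕ} (hi : i + p < N) :
    SemiconjBy (coxeterProd s N ^ p) (s i) (s (i + p)) := by
  induction p with
  | zero => simp
  | succ p ih =>
    rw [pow_succ']
    exact (semiconjBy_coxeterProd hcomm hbraid (by omega) le_rfl).mul_left (ih (by omega))

theorem coxeterProd_mul_coxeterProd {m : ℕ} (hm : m < N) :
    coxeterProd s N * coxeterProd s m =
      coxeterProd (fun i ↦ s (i + 1)) m * coxeterProd s N := by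
  induction m with
  | zero => simp [coxeterProd]
  | succ m ih =>
    rw [coxeterProd_succ, ← mul_assoc, ih (by omega), mul_assoc,
      (semiconjBy_coxeterProd hcomm hbraid hm le_rfl).eq, coxeterProd_succ, mul_assoc]

theorem semiconjBy_coxeterProd_sq_last {m : ℕ} (hm : N = m + 1) :
    SemiconjBy (coxeterProd s N ^ 2) (s m) (s 0) := by
  have hfirst : coxeterProd s N = s 0 * coxeterProd (fun i ↦ s (i + 1)) m := by
    rw [hm, coxeterProd_succ']
  have hlast : coxeterProd s N = coxeterProd s m * s m := by rw [hm, coxeterProd_succ]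
  calc coxeterProd s N ^ 2 * s m
      = s 0 * (coxeterProd (fun i ↦ s (i + 1)) m * coxeterProd s N) * s m := by
        rw [← mul_assoc, ← hfirst, pow_two]
    _ = s 0 * (coxeterProd s N * (coxeterProd s m * s m)) := by
        rw [← coxeterProd_mul_coxeterProd hcomm hbraid (by omega)]
        simp only [mul_assoc]
    _ = s 0 * coxeterProd s N ^ 2 := by rw [← hlast, pow_two]

-- Conjugation by `δ ^ (N - 1 - i)`, then `δ ^ 2`, then `δ ^ i` moves
-- `s i` to `s (N - 1)`, to `s 0`, and back to `s i`.
theorem commute_coxeterProd_pow {i : ℕ} (hi : i < N) :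
    Commute (coxeterProd s N ^ (N + 1)) (s i) := by
  obtain ⟨r, rfl⟩ : ∃ r, N = i + r + 1 := ⟨N - i - 1, by omega⟩
  have hup := semiconjBy_coxeterProd_pow hcomm hbraid (p := r) (i := i) (by omega)
  have hwrap := semiconjBy_coxeterProd_sq_last hcomm hbraid rfl
  have hback := semiconjBy_coxeterProd_pow hcomm hbraid (p := i) (i := 0) (by omega)
  rw [zero_add] at hback
  rw [show i + r + 1 + 1 = i + (2 + r) by omega, pow_add, pow_add]
  exact hback.mul_left (hwrap.mul_left hup)

theorem dvd_coxeterProd_pow {i : ℕ} (hi : i < N) : s i ∣ coxeterProd s N ^ (N + 1) := by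
  obtain ⟨m, rfl⟩ : ∃ m, N = m + 1 := ⟨N - 1, by omega⟩
  have hshift := semiconjBy_coxeterProd_pow hcomm hbraid (p := i) (i := 0) (by omega)
  rw [zero_add] at hshift
  have hdvd : s i ∣ coxeterProd s (m + 1) ^ (i + 1) := by
    use coxeterProd s (m + 1) ^ i * coxeterProd (fun i ↦ s (i + 1)) m
    rw [← mul_assoc, ← hshift.eq, mul_assoc, ← coxeterProd_succ', pow_succ]
  exact hdvd.trans (pow_dvd_pow _ (by omega))

end FullTwist

theorem IsBraidFamily.exists_commute_and_dvd {M : Type*} [Monoid M] {N : ℕ} {σ : Fin N → M}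
    (hσ : IsBraidFamily σ) : ∃ z : M, ∀ i, Commute z (σ i) ∧ σ i ∣ z := by
  let s : ℕ → M := fun i ↦ if h : i < N then σ ⟨i, h⟩ else 1
  have hs (i : Fin N) : s i = σ i := dif_pos i.2
  have hcomm : ∀ i j, i + 2 ≤ j → j < N → Commute (s i) (s j) := fun i j hij hj ↦ by
    simpa only [← hs] using hσ.commute ⟨i, by omega⟩ ⟨j, hj⟩ hij
  have hbraid : ∀ i, i + 1 < N → s i * s (i + 1) * s i = s (i + 1) * s i * s (i + 1) :=
    fun i hi ↦ by simpa only [← hs] using hσ.braid ⟨i, by omega⟩ ⟨i + 1, hi⟩ rfl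
  refine ⟨coxeterProd s N ^ (N + 1), fun i ↦ ?_⟩
  rw [← hs]
  exact ⟨commute_coxeterProd_pow hcomm hbraid i.2, dvd_coxeterProd_pow hcomm hbraid i.2⟩

theorem exists_mul_pow_mem_of_mem_closure {G : Type*} [Group G] {S : Set G} {H : Submonoid G}
    {z : G} (hz : z ∈ Subgroup.center G) (hS : ∀ s ∈ S, s ∈ H) (hS_inv : ∀ s ∈ S, s⁻¹ * z ∈ H)
    {g : G} (hg : g ∈ Subgroup.closure S) : ∃ p : ℕ, g * z ^ p ∈ H := by
  induction hg using Subgroup.closure_induction'' with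
  | one => exact ⟨0, by simp⟩
  | mem s hs => exact ⟨0, by simpa using hS s hs⟩
  | inv_mem s hs => exact ⟨1, by simpa using hS_inv s hs⟩
  | mul x y _ _ hx hy =>
    obtain ⟨p, hp⟩ := hx
    obtain ⟨r, hr⟩ := hy
    have hcomm : Commute y (z ^ p) := Commute.pow_right (Subgroup.mem_center_iff.mp hz y) p
    refine ⟨p + r, ?_⟩
    rw [pow_add, mul_assoc x, hcomm.left_comm, ← mul_assoc x]
    exact H.mul_mem hp hr

theorem BraidGroup.exists_mul_toBraidGroup_eq {n : ℕ} (g : BraidGroup n) :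
    ∃ x y : BraidMonoid n, g * x.toBraidGroup = y.toBraidGroup := by
  obtain ⟨z, hz⟩ := (BraidMonoid.isBraidFamily_of (n := n)).exists_commute_and_dvd
  have hcenter : z.toBraidGroup ∈ Subgroup.center (BraidGroup n) := by
    rw [← Subgroup.centralizer_univ, ← Subgroup.coe_top, ← closure_range_of,
      Subgroup.centralizer_closure, Subgroup.mem_centralizer_iff]
    rintro _ ⟨i, rfl⟩
    exact (BraidMonoid.toBraidGroup_of i ▸ (hz i).1.map BraidMonoid.toBraidGroup).symm
  have hpos : ∀ s ∈ Set.range (of (n := n)), s ∈ MonoidHom.mrange BraidMonoid.toBraidGroup := by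
    rintro _ ⟨i, rfl⟩
    exact ⟨.of i, BraidMonoid.toBraidGroup_of i⟩
  have hinv : ∀ s ∈ Set.range (of (n := n)),
      s⁻¹ * z.toBraidGroup ∈ MonoidHom.mrange BraidMonoid.toBraidGroup := by
    rintro _ ⟨i, rfl⟩
    obtain ⟨y, rfl⟩ := (hz i).2
    exact ⟨y, by simp⟩
  have hg : g ∈ Subgroup.closure (Set.range of) := closure_range_of.symm ▸ Subgroup.mem_top g
  obtain ⟨p, y, hy⟩ := exists_mul_pow_mem_of_mem_closure hcenter hpos hinv hg
  exact ⟨z ^ p, y, by rw [map_pow, hy]⟩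

section KrammerOp

variable {R : Type*} [CommRing R]

/-- The Lawrence-Krammer operator of the generator `σ_k`, transposed so that it acts on coefficient
functions. Only the entries `(i, j)` with `i < j` carry meaning; the others are fixed. Indexing by
`ℕ × ℕ` makes the operator independent of the number of strings. -/
def krammerOp (q t : R) (k : ℕ) : Module.End R (ℕ × ℕ → R) where
  toFun f := fun (i, j) ↦
    if i = k ∧ j = k + 1 then t * q ^ 2 * f (k, k + 1)
    else if i < k ∧ j = k then (1 - q) * f (i, k) + q * f (i, k + 1)
    else if i < k ∧ j = k + 1 then f (i, k) + t * q * (q - 1) * f (k, k + 1)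
    else if i = k ∧ k + 1 < j then t * q * (q - 1) * f (k, k + 1) + f (k + 1, j)
    else if i = k + 1 ∧ k + 1 < j then q * f (k, j) + (1 - q) * f (k + 1, j)
    else if i < k ∧ k + 1 < j then f (i, j) + t * (q - 1) ^ 2 * f (k, k + 1)
    else f (i, j)
  map_add' f g := by
    ext ⟨i, j⟩
    simp only [Pi.add_apply]
    split_ifs <;> ring
  map_smul' c f := by
    ext ⟨i, j⟩
    simp only [Pi.smul_apply, smul_eq_mul, RingHom.id_apply]
    split_ifs <;> ring

variable (q t : R)

section Apply

variable {k i j : ℕ} (f : ℕ × ℕ → R)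

theorem krammerOp_apply_self (hi : i = k) (hj : j = k + 1) :
    krammerOp q t k f (i, j) = t * q ^ 2 * f (k, k + 1) :=
  if_pos ⟨hi, hj⟩

theorem krammerOp_apply_lt_left (hi : i < k) (hj : j = k) :
    krammerOp q t k f (i, j) = (1 - q) * f (i, k) + q * f (i, k + 1) := by
  dsimp only [krammerOp, LinearMap.coe_mk, AddHom.coe_mk]
  grind

theorem krammerOp_apply_lt_right (hi : i < k) (hj : j = k + 1) :
    krammerOp q t k f (i, j) = f (i, k) + t * q * (q - 1) * f (k, k + 1) := by
  dsimp only [krammerOp, LinearMap.coe_mk, AddHom.coe_mk]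
  grind

theorem krammerOp_apply_left_gt (hi : i = k) (hj : k + 1 < j) :
    krammerOp q t k f (i, j) = t * q * (q - 1) * f (k, k + 1) + f (k + 1, j) := by
  dsimp only [krammerOp, LinearMap.coe_mk, AddHom.coe_mk]
  grind

theorem krammerOp_apply_right_gt (hi : i = k + 1) (hj : k + 1 < j) :
    krammerOp q t k f (i, j) = q * f (k, j) + (1 - q) * f (k + 1, j) := by
  dsimp only [krammerOp, LinearMap.coe_mk, AddHom.coe_mk]
  grind

theorem krammerOp_apply_lt_gt (hi : i < k) (hj : k + 1 < j) :
    krammerOp q t k f (i, j) = f (i, j) + t * (q - 1) ^ 2 * f (k, k + 1) := by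
  dsimp only [krammerOp, LinearMap.coe_mk, AddHom.coe_mk]
  grind

theorem krammerOp_apply_of_disjoint (h : j ≤ i ∨ j < k ∨ k + 1 < i) :
    krammerOp q t k f (i, j) = f (i, j) := by
  dsimp only [krammerOp, LinearMap.coe_mk, AddHom.coe_mk]
  grind

end Apply

theorem krammerOp_braid (k : ℕ) :
    krammerOp q t k * krammerOp q t (k + 1) * krammerOp q t k =
      krammerOp q t (k + 1) * krammerOp q t k * krammerOp q t (k + 1) := by
  ext1 f
  funext ⟨i, j⟩
  simp only [Module.End.mul_apply]
  rcases le_or_gt j i with hij | hij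
  · simp (disch := omega) only [krammerOp_apply_of_disjoint]
  have hi : i < k ∨ i = k ∨ i = k + 1 ∨ i = k + 2 ∨ k + 2 < i := by omega
  have hj : j < k ∨ j = k ∨ j = k + 1 ∨ j = k + 2 ∨ k + 2 < j := by omega
  rcases hi with hi | rfl | rfl | rfl | hi <;> rcases hj with hj | rfl | rfl | rfl | hj <;>
  first
  | omega
  | simp (disch := omega) only [krammerOp_apply_self, krammerOp_apply_lt_left,
      krammerOp_apply_lt_right, krammerOp_apply_left_gt, krammerOp_apply_right_gt,
      krammerOp_apply_lt_gt, krammerOp_apply_of_disjoint]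
    try ring

theorem commute_krammerOp {k l : ℕ} (hkl : k + 2 ≤ l) :
    Commute (krammerOp q t k) (krammerOp q t l) := by
  ext1 f
  funext ⟨i, j⟩
  simp only [Module.End.mul_apply]
  rcases le_or_gt j i with hij | hij
  · simp (disch := omega) only [krammerOp_apply_of_disjoint]
  have hi : i < k ∨ i = k ∨ i = k + 1 ∨ (k + 1 < i ∧ i < l) ∨ i = l ∨ i = l + 1 ∨ l + 1 < i := by
    omega
  have hj : j < k ∨ j = k ∨ j = k + 1 ∨ (k + 1 < j ∧ j < l) ∨ j = l ∨ j = l + 1 ∨ l + 1 < j := by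
    omega
  rcases hi with hi | rfl | rfl | hi | rfl | rfl | hi <;>
  rcases hj with hj | rfl | rfl | hj | rfl | rfl | hj <;>
  first
  | omega
  | simp (disch := omega) only [krammerOp_apply_self, krammerOp_apply_lt_left,
      krammerOp_apply_lt_right, krammerOp_apply_left_gt, krammerOp_apply_right_gt,
      krammerOp_apply_lt_gt, krammerOp_apply_of_disjoint]
    try ring

open Polynomial in
theorem aeval_krammerOp_eq_zero (k : ℕ) :
    aeval (krammerOp q t k) ((X - 1) * (X + C q) * (X - C (t * q ^ 2))) = 0 := by
  ext1 f
  funext ⟨i, j⟩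
  simp only [map_mul, map_sub, map_add, map_one, aeval_X, aeval_C, Module.End.mul_apply,
    LinearMap.sub_apply, LinearMap.add_apply, Module.End.one_apply, Module.algebraMap_end_apply,
    Pi.sub_apply, Pi.add_apply, Pi.smul_apply, smul_eq_mul, LinearMap.zero_apply, Pi.zero_apply]
  rcases le_or_gt j i with hij | hij
  · simp (disch := omega) only [krammerOp_apply_of_disjoint, map_smul, Pi.smul_apply, smul_eq_mul]
    ring
  have hi : i < k ∨ i = k ∨ i = k + 1 ∨ k + 1 < i := by omega
  have hj : j < k ∨ j = k ∨ j = k + 1 ∨ k + 1 < j := by omega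
  rcases hi with hi | rfl | rfl | hi <;> rcases hj with hj | rfl | rfl | hj <;>
  first
  | omega
  | simp (disch := omega) only [krammerOp_apply_self, krammerOp_apply_lt_left,
      krammerOp_apply_lt_right, krammerOp_apply_left_gt, krammerOp_apply_right_gt,
      krammerOp_apply_lt_gt, krammerOp_apply_of_disjoint, Pi.smul_apply, smul_eq_mul]
    ring

theorem krammerOp_apply_congr {n k i j : ℕ} {f g : ℕ × ℕ → R} (hk : k + 1 < n)
    (h : ∀ i j, i < j → j < n → f (i, j) = g (i, j)) (hij : i < j) (hj : j < n) :
    krammerOp q t k f (i, j) = krammerOp q t k g (i, j) := by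
  dsimp only [krammerOp, LinearMap.coe_mk, AddHom.coe_mk]
  split_ifs <;> grind

theorem krammerOp_comp_ringHom {R' : Type*} [CommRing R'] (φ : R →+* R') (k : ℕ) (f : ℕ × ℕ → R) :
    krammerOp (φ q) (φ t) k (φ ∘ f) = φ ∘ krammerOp q t k f := by
  funext ⟨i, j⟩
  dsimp only [krammerOp, LinearMap.coe_mk, AddHom.coe_mk, Function.comp_apply]
  split_ifs <;> simp

theorem krammerOp_zero_nonneg {𝕜 : Type*} [CommRing 𝕜] [LinearOrder 𝕜] [IsStrictOrderedRing 𝕜]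
    {q : 𝕜} (hq0 : 0 ≤ q) (hq1 : q ≤ 1) {k : ℕ} {f : ℕ × ℕ → 𝕜} (hf : 0 ≤ f) :
    0 ≤ krammerOp q 0 k f := by
  rintro ⟨i, j⟩
  have hq1' : 0 ≤ 1 - q := sub_nonneg.mpr hq1
  dsimp only [krammerOp, LinearMap.coe_mk, AddHom.coe_mk, Pi.zero_apply]
  simp only [zero_mul, add_zero, zero_add]
  split_ifs
  exacts [le_rfl, add_nonneg (mul_nonneg hq1' (hf _)) (mul_nonneg hq0 (hf _)), hf _, hf _,
    add_nonneg (mul_nonneg hq0 (hf _)) (mul_nonneg hq1' (hf _)), hf _, hf _]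

end KrammerOp

section AEval

open Polynomial

theorem isUnit_of_aeval_eq_zero {R A : Type*} [CommRing R] [Ring A] [Algebra R A] {p : R[X]}
    (hp : IsUnit (p.coeff 0)) {a : A} (ha : aeval a p = 0) : IsUnit a := by
  have hsum : a * aeval a p.divX + algebraMap R A (p.coeff 0) = 0 := by
    rw [← ha]
    conv_rhs => rw [← X_mul_divX_add p]
    rw [map_add, map_mul, aeval_X, aeval_C]
  have hunit : IsUnit (a * aeval a p.divX) := by
    rw [eq_neg_of_add_eq_zero_left hsum]
    exact (hp.map (algebraMap R A)).neg
  have hcomm : Commute a (aeval a p.divX) := by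
    simpa using (Commute.all X p.divX).map (aeval a)
  exact (hcomm.isUnit_mul_iff.mp hunit).1

theorem aeval_apply_of_intertwines {R V W : Type*} [CommSemiring R] [AddCommMonoid V]
    [Module R V] [AddCommMonoid W] [Module R W] {a : Module.End R V} {b : Module.End R W}
    {r : V →ₗ[R] W} (h : ∀ v, b (r v) = r (a v)) (p : R[X]) (v : V) :
    aeval b p (r v) = r (aeval a p v) := by
  induction p using Polynomial.induction_on generalizing v with
  | C c => simp
  | add p p' hp hp' => simp [hp, hp']
  | monomial m c ih =>
    rw [pow_succ, ← mul_assoc, map_mul (aeval b), map_mul (aeval a), aeval_X, aeval_X,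
      Module.End.mul_apply, Module.End.mul_apply, h, ih]

end AEval

/-- The pairs `i < j` of strings among `n`, encoded as `⟨j, i⟩`. -/
abbrev StrandPair (n : ℕ) : Type :=
  Σ j : Fin n, Fin j

namespace StrandPair

theorem card_eq (n : ℕ) : Fintype.card (StrandPair n) = n * (n - 1) / 2 := by
  simp only [Fintype.card_sigma, Fintype.card_fin]
  rw [Fin.sum_univ_eq_sum_range (fun j ↦ j), Finset.sum_range_id]

variable {n : ℕ}

/-- The pair `(i, j)` of natural numbers encoded by `⟨j, i⟩`. -/
def toProd (p : StrandPair n) : ℕ × ℕ :=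
  (p.2, p.1)

theorem toProd_injective : Function.Injective (toProd (n := n)) := by
  rintro ⟨⟨j, hj⟩, ⟨i, hi⟩⟩ ⟨⟨j', hj'⟩, ⟨i', hi'⟩⟩ h
  obtain ⟨rfl, rfl⟩ : i = i' ∧ j = j' := Prod.ext_iff.mp h
  rfl

/-- Restriction of coefficient functions to the pairs `i < j < n`. -/
def restrict (R : Type*) [CommRing R] (n : ℕ) : (ℕ × ℕ → R) →ₗ[R] (StrandPair n → R) :=
  LinearMap.funLeft R R toProd

variable {R : Type*} [CommRing R]

theorem restrict_surjective : Function.Surjective (restrict R n) :=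
  LinearMap.funLeft_surjective_of_injective R R toProd toProd_injective

theorem restrict_eq_restrict_iff {f g : ℕ × ℕ → R} :
    restrict R n f = restrict R n g ↔ ∀ i j, i < j → j < n → f (i, j) = g (i, j) :=
  ⟨fun h i j hij hj ↦ congrFun h ⟨⟨j, hj⟩, ⟨i, hij⟩⟩, fun h ↦ funext fun p ↦ h _ _ p.2.2 p.1.2⟩

theorem restrict_comp {R' : Type*} [CommRing R'] (φ : R →+* R') (f : ℕ × ℕ → R) :
    restrict R' n (φ ∘ f) = φ ∘ restrict R n f :=
  rfl

end StrandPair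

open StrandPair

section PairOp

variable {R : Type*} [CommRing R] {n : ℕ}

/-- The Lawrence-Krammer operator of `σ_k` on `n` strings. -/
noncomputable def pairOp (n : ℕ) (q t : R) (k : ℕ) : Module.End R (StrandPair n → R) :=
  restrict R n ∘ₗ krammerOp q t k ∘ₗ Function.ExtendByZero.linearMap R toProd

theorem pairOp_restrict (q t : R) {k : ℕ} (hk : k + 1 < n) (f : ℕ × ℕ → R) :
    pairOp n q t k (restrict R n f) = restrict R n (krammerOp q t k f) := by
  have hextend : restrict R n (Function.ExtendByZero.linearMap R toProd (restrict R n f)) =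
      restrict R n f :=
    Function.extend_comp toProd_injective _ _
  rw [restrict_eq_restrict_iff] at hextend
  exact restrict_eq_restrict_iff.mpr fun i j hij hj ↦ krammerOp_apply_congr q t hk hextend hij hj

theorem isBraidFamily_pairOp (n : ℕ) (q t : R) :
    IsBraidFamily fun k : Fin (n - 1) ↦ pairOp n q t k where
  commute k l hkl := by
    apply LinearMap.ext
    rw [restrict_surjective.forall]
    intro f
    simp (disch := omega) only [Module.End.mul_apply, pairOp_restrict]
    exact congrArg (restrict R n) (congrArg (· f) (commute_krammerOp q t hkl).eq)
  braid k l hkl := by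
    apply LinearMap.ext
    rw [restrict_surjective.forall]
    intro f
    simp (disch := omega) only [Module.End.mul_apply, pairOp_restrict, hkl]
    exact congrArg (restrict R n) (congrArg (· f) (krammerOp_braid q t k))

open Polynomial in
theorem isUnit_pairOp {q t : R} (hq : IsUnit q) (ht : IsUnit t) {k : ℕ} (hk : k + 1 < n) :
    IsUnit (pairOp n q t k) := by
  apply isUnit_of_aeval_eq_zero (p := (X - 1) * (X + C q) * (X - C (t * q ^ 2)))
  · simpa [coeff_zero_eq_eval_zero] using hq.mul (ht.mul (hq.pow 2))
  · apply LinearMap.ext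
    rw [restrict_surjective.forall]
    intro f
    rw [aeval_apply_of_intertwines (pairOp_restrict q t hk), aeval_krammerOp_eq_zero]
    rfl

end PairOp

section KrammerMonoidRep

variable {R : Type*} [CommRing R] {n : ℕ}

/-- The transposed Lawrence-Krammer representation of the braid monoid. -/
noncomputable def krammerMonoidRep (n : ℕ) (q t : R) :
    BraidMonoid n →* Module.End R (StrandPair n → R) :=
  BraidMonoid.lift (isBraidFamily_pairOp n q t)

variable (q t : R) (x : BraidMonoid n)

@[simp]
theorem krammerMonoidRep_of (k : Fin (n - 1)) :
    krammerMonoidRep n q t (.of k) = pairOp n q t k :=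
  BraidMonoid.lift_of _ k

theorem krammerMonoidRep_mul_of_restrict (k : Fin (n - 1)) (f : ℕ × ℕ → R) :
    krammerMonoidRep n q t (x * .of k) (restrict R n f) =
      krammerMonoidRep n q t x (restrict R n (krammerOp q t k f)) := by
  rw [map_mul, Module.End.mul_apply, krammerMonoidRep_of, pairOp_restrict q t (by omega)]

theorem krammerMonoidRep_comp_ringHom {R' : Type*} [CommRing R'] (φ : R →+* R') (f : ℕ × ℕ → R) :
    krammerMonoidRep n (φ q) (φ t) x (restrict R' n (φ ∘ f)) =
      φ ∘ krammerMonoidRep n q t x (restrict R n f) := by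
  induction x using BraidMonoid.induction_on_right generalizing f with
  | one => simp only [map_one, Module.End.one_apply, restrict_comp]
  | mul_of x k ih =>
    rw [krammerMonoidRep_mul_of_restrict, krammerMonoidRep_mul_of_restrict,
      krammerOp_comp_ringHom, ih]

variable {𝕜 : Type*} [CommRing 𝕜] [LinearOrder 𝕜] [IsStrictOrderedRing 𝕜]

theorem krammerMonoidRep_zero_nonneg {q : 𝕜} (hq0 : 0 ≤ q) (hq1 : q ≤ 1) {f : ℕ × ℕ → 𝕜}
    (hf : 0 ≤ f) : 0 ≤ krammerMonoidRep n q 0 x (restrict 𝕜 n f) := by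
  induction x using BraidMonoid.induction_on_right generalizing f with
  | one => exact fun p ↦ hf _
  | mul_of x k ih =>
    rw [krammerMonoidRep_mul_of_restrict]
    exact ih (krammerOp_zero_nonneg hq0 hq1 hf)

end KrammerMonoidRep

section Divisibility

variable {𝕜 : Type*} [CommRing 𝕜] {n : ℕ} {q : 𝕜}

namespace BraidMonoid

/-- The representation of `x` at `t = 0` kills the coordinate function of the pair `p`; in the
untransposed Lawrence-Krammer matrix of `x`, the row indexed by `p` vanishes. -/
def Kills (q : 𝕜) (x : BraidMonoid n) (p : ℕ × ℕ) : Prop :=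
  krammerMonoidRep n q 0 x (restrict 𝕜 n (Pi.single p 1)) = 0

theorem kills_mul_of (x : BraidMonoid n) (k : Fin (n - 1)) : (x * of k).Kills q (k, k + 1) := by
  have hzero : krammerOp q 0 k (Pi.single ((k : ℕ), (k : ℕ) + 1) 1) = 0 := by
    funext ⟨i, j⟩
    simp only [krammerOp, LinearMap.coe_mk, AddHom.coe_mk, Pi.single_apply, Pi.zero_apply]
    grind
  rw [Kills, krammerMonoidRep_mul_of_restrict, hzero, map_zero, map_zero]

theorem not_kills_one [Nontrivial 𝕜] {i j : ℕ} (hij : i < j) (hj : j < n) :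
    ¬ (1 : BraidMonoid n).Kills q (i, j) := by
  rw [Kills, map_one, Module.End.one_apply, ← map_zero (restrict 𝕜 n), restrict_eq_restrict_iff]
  intro h
  simpa using h i j hij hj

variable [LinearOrder 𝕜] [IsStrictOrderedRing 𝕜]

/-- Nonnegativity rules out cancellation among the coordinates of the image of `p`. -/
theorem Kills.of_mul_of (hq0 : 0 ≤ q) (hq1 : q ≤ 1) {x : BraidMonoid n} {k : Fin (n - 1)}
    {p p' : ℕ × ℕ} (h : (x * of k).Kills q p) (hpos : 0 < krammerOp q 0 k (Pi.single p 1) p') :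
    x.Kills q p' := by
  rw [Kills, krammerMonoidRep_mul_of_restrict] at h
  set f := krammerOp q 0 k (Pi.single p 1)
  have hsub : 0 ≤ f - f p' • Pi.single p' 1 := fun s ↦ by
    have hs : 0 ≤ f s := krammerOp_zero_nonneg hq0 hq1 (Pi.single_nonneg.mpr zero_le_one) s
    by_cases hp : s = p' <;> simp [hp, hs]
  funext s
  refine le_antisymm ?_ ?_
  · have hle := krammerMonoidRep_zero_nonneg x hq0 hq1 hsub s
    rw [map_sub, map_sub, h, map_smul, map_smul] at hle
    exact nonpos_of_mul_nonpos_right (by simpa using hle) hpos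
  · exact krammerMonoidRep_zero_nonneg x hq0 hq1 (Pi.single_nonneg.mpr zero_le_one) s

theorem Kills.of_mul_of_far (hq0 : 0 ≤ q) (hq1 : q ≤ 1) {x : BraidMonoid n} {a k : Fin (n - 1)}
    (hak : (a : ℕ) + 2 ≤ k ∨ (k : ℕ) + 2 ≤ a) (h : (x * of a).Kills q (k, k + 1)) :
    x.Kills q (k, k + 1) := by
  apply h.of_mul_of hq0 hq1
  rw [krammerOp_apply_of_disjoint _ _ _ (by omega), Pi.single_eq_same]
  exact zero_lt_one

theorem Kills.of_mul_of_adjacent (hq0 : 0 < q) (hq1 : q < 1) {x : BraidMonoid n}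
    {a k : Fin (n - 1)} (hak : (k : ℕ) = a + 1 ∨ (a : ℕ) = k + 1)
    (h : (x * of a).Kills q (k, k + 1)) : x.Kills q (k, k + 1) := by
  apply h.of_mul_of hq0.le hq1.le
  rcases hak with hka | hak
  · rw [krammerOp_apply_right_gt _ _ _ hka (by omega), hka]
    simpa using hq1
  · rw [krammerOp_apply_lt_left _ _ _ (by omega) hak.symm, hak]
    simpa using hq1

theorem Kills.of_mul_of_mul_of_adjacent (hq0 : 0 < q) (hq1 : q < 1) {x : BraidMonoid n}
    {a k : Fin (n - 1)} (hak : (k : ℕ) = a + 1 ∨ (a : ℕ) = k + 1)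
    (h : (x * of k * of a).Kills q (k, k + 1)) : x.Kills q (a, a + 1) := by
  rcases hak with hka | hak
  · have h' : (x * of k).Kills q (a, a + 2) := by
      apply h.of_mul_of hq0.le hq1.le
      rw [krammerOp_apply_left_gt _ _ _ rfl (by omega), hka]
      simp
    apply h'.of_mul_of hq0.le hq1.le
    rw [krammerOp_apply_lt_left _ _ _ (by omega) hka.symm, hka]
    simpa using hq0
  · have h' : (x * of k).Kills q (k, k + 2) := by
      apply h.of_mul_of hq0.le hq1.le
      rw [krammerOp_apply_lt_right _ _ _ (by omega) (by omega), hak]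
      simp
    apply h'.of_mul_of hq0.le hq1.le
    rw [krammerOp_apply_right_gt _ _ _ hak (by omega), hak]
    simpa using hq0

theorem Kills.exists_eq_mul_of (hq0 : 0 < q) (hq1 : q < 1) {x : BraidMonoid n} {k : Fin (n - 1)}
    (h : x.Kills q (k, k + 1)) : ∃ y, x = y * of k := by
  induction hlen : x.length using Nat.strong_induction_on generalizing x k with
  | _ m ih =>
  subst hlen
  induction x using induction_on_right with
  | one => exact absurd h (not_kills_one (by omega) (by omega))
  | mul_of u a _ =>
    have hlen := length_mul_of u a
    obtain rfl | hfar | hadj : a = k ∨ ((a : ℕ) + 2 ≤ k ∨ (k : ℕ) + 2 ≤ a) ∨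
        ((k : ℕ) = a + 1 ∨ (a : ℕ) = k + 1) := by
      rw [Fin.ext_iff]
      omega
    · exact ⟨u, rfl⟩
    · obtain ⟨v, rfl⟩ := ih u.length (by omega) (h.of_mul_of_far hq0.le hq1.le hfar) rfl
      exact ⟨v * of a, by rw [mul_assoc, ← (commute_of hfar).eq, mul_assoc]⟩
    · obtain ⟨v, rfl⟩ := ih u.length (by omega) (h.of_mul_of_adjacent hq0 hq1 hadj) rfl
      have hlen' := length_mul_of v k
      obtain ⟨w, rfl⟩ :=
        ih v.length (by omega) (h.of_mul_of_mul_of_adjacent hq0 hq1 hadj) rfl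
      refine ⟨w * of k * of a, ?_⟩
      simp only [mul_assoc]
      rw [← mul_assoc (of a), braid_of hadj, mul_assoc]

end BraidMonoid

end Divisibility

section Faithfulness

open BraidMonoid

variable {R : Type*} [CommRing R] {n : ℕ}

section Specialization

variable {R' : Type*} [CommRing R'] {q t : R} {x y : BraidMonoid n}

theorem krammerMonoidRep_eq_of_injective {φ : R →+* R'} (hφ : Function.Injective φ)
    (h : krammerMonoidRep n (φ q) (φ t) x = krammerMonoidRep n (φ q) (φ t) y) :
    krammerMonoidRep n q t x = krammerMonoidRep n q t y := by
  apply LinearMap.ext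
  rw [restrict_surjective.forall]
  intro f
  apply hφ.comp_left
  dsimp only
  rw [← krammerMonoidRep_comp_ringHom, ← krammerMonoidRep_comp_ringHom, h]

theorem krammerMonoidRep_eq_of_surjective {φ : R →+* R'} (hφ : Function.Surjective φ)
    (h : krammerMonoidRep n q t x = krammerMonoidRep n q t y) :
    krammerMonoidRep n (φ q) (φ t) x = krammerMonoidRep n (φ q) (φ t) y := by
  apply LinearMap.ext
  rw [restrict_surjective.forall, hφ.comp_left.forall]
  intro f
  rw [krammerMonoidRep_comp_ringHom, krammerMonoidRep_comp_ringHom, h]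

end Specialization

variable {𝕜 : Type*} [CommRing 𝕜] [Algebra 𝕜 R] {q : 𝕜} {t : R}

open Polynomial in
theorem krammerMonoidRep_zero_eq_of_transcendental (ht : Transcendental 𝕜 t) {x y : BraidMonoid n}
    (h : krammerMonoidRep n (algebraMap 𝕜 R q) t x = krammerMonoidRep n (algebraMap 𝕜 R q) t y) :
    krammerMonoidRep n q 0 x = krammerMonoidRep n q 0 y := by
  have hgeneric : krammerMonoidRep n (C q) X x = krammerMonoidRep n (C q) X y := by
    apply krammerMonoidRep_eq_of_injective (φ := (aeval (R := 𝕜) t : 𝕜[X] →+* R))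
      (transcendental_iff_injective.mp ht)
    simpa using h
  simpa using krammerMonoidRep_eq_of_surjective (φ := evalRingHom 0)
    (fun c ↦ ⟨C c, eval_C⟩) hgeneric

variable [LinearOrder 𝕜] [IsStrictOrderedRing 𝕜]

theorem exists_eq_mul_of_of_krammerMonoidRep_eq (hq0 : 0 < q) (hq1 : q < 1)
    (ht : Transcendental 𝕜 t) {x y : BraidMonoid n} {k : Fin (n - 1)}
    (h : krammerMonoidRep n (algebraMap 𝕜 R q) t (x * of k) =
      krammerMonoidRep n (algebraMap 𝕜 R q) t y) : ∃ z, y = z * of k := by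
  have hy : y.Kills q (k, k + 1) := by
    rw [Kills, ← krammerMonoidRep_zero_eq_of_transcendental ht h]
    exact kills_mul_of x k
  exact hy.exists_eq_mul_of hq0 hq1

theorem krammerMonoidRep_injective (hq : IsUnit q) (hq0 : 0 < q) (hq1 : q < 1) (ht : IsUnit t)
    (ht' : Transcendental 𝕜 t) :
    Function.Injective (krammerMonoidRep n (algebraMap 𝕜 R q) t) := by
  intro x y h
  induction x using induction_on_right generalizing y with
  | one =>
    induction y using induction_on_right with
    | one => rfl
    | mul_of y k _ =>
      obtain ⟨z, hz⟩ := exists_eq_mul_of_of_krammerMonoidRep_eq hq0 hq1 ht' h.symm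
      have hlength := congrArg length hz
      rw [length_mul_of] at hlength
      simp [length] at hlength
  | mul_of x k ih =>
    obtain ⟨z, rfl⟩ := exists_eq_mul_of_of_krammerMonoidRep_eq hq0 hq1 ht' h
    have hk : IsUnit (pairOp n (algebraMap 𝕜 R q) t k) :=
      isUnit_pairOp (hq.map (algebraMap 𝕜 R)) ht (by omega)
    rw [map_mul, map_mul, krammerMonoidRep_of, hk.mul_left_inj] at h
    rw [ih h]

end Faithfulness

section KrammerRep

variable {R : Type*} [CommRing R] {n : ℕ} (q t : Rˣ)

theorem isBraidFamily_pairOp_unit (n : ℕ) : IsBraidFamily fun k : Fin (n - 1) ↦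
    (isUnit_pairOp (n := n) q.isUnit t.isUnit (k := k) (by omega)).unit where
  commute k l hkl := Units.ext ((isBraidFamily_pairOp n (q : R) t).commute k l hkl)
  braid k l hkl := Units.ext ((isBraidFamily_pairOp n (q : R) t).braid k l hkl)

/-- The transposed Lawrence-Krammer representation of the braid group. -/
noncomputable def krammerRep (n : ℕ) (q t : Rˣ) :
    BraidGroup n →* LinearMap.GeneralLinearGroup R (StrandPair n → R) :=
  BraidGroup.lift (isBraidFamily_pairOp_unit q t n)

theorem krammerRep_toBraidGroup (x : BraidMonoid n) :
    (krammerRep n q t x.toBraidGroup : Module.End R (StrandPair n → R)) =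
      krammerMonoidRep n (q : R) t x := by
  induction x using BraidMonoid.induction_on_right with
  | one => simp only [map_one, Units.val_one]
  | mul_of x k ih =>
    rw [map_mul, map_mul, Units.val_mul, ih, map_mul, krammerMonoidRep_of,
      BraidMonoid.toBraidGroup_of, krammerRep, BraidGroup.lift_of, IsUnit.unit_spec]

variable {𝕜 : Type*} [CommRing 𝕜] [LinearOrder 𝕜] [IsStrictOrderedRing 𝕜] [Algebra 𝕜 R]

theorem krammerRep_injective {q : 𝕜ˣ} (hq0 : 0 < (q : 𝕜)) (hq1 : (q : 𝕜) < 1) {t : Rˣ}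
    (ht : Transcendental 𝕜 (t : R)) :
    Function.Injective (krammerRep n (Units.map (algebraMap 𝕜 R) q) t) := by
  rw [injective_iff_map_eq_one]
  intro g hg
  obtain ⟨x, y, hxy⟩ := g.exists_mul_toBraidGroup_eq
  have hrep := congrArg (krammerRep n (Units.map (algebraMap 𝕜 R) q) t) hxy
  rw [map_mul, hg, one_mul, ← Units.val_inj, krammerRep_toBraidGroup,
    krammerRep_toBraidGroup] at hrep
  obtain rfl : x = y := krammerMonoidRep_injective q.isUnit hq0 hq1 t.isUnit ht hrep
  exact mul_eq_right.mp hxy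

end KrammerRep

theorem exists_unit_transcendental_rat_real : ∃ t : ℝˣ, Transcendental ℚ (t : ℝ) := by
  have ht : Transcendental ℚ (liouvilleNumber (2 : ℕ)) := fun h ↦
    transcendental_liouvilleNumber le_rfl ((IsFractionRing.isAlgebraic_iff ℤ ℚ ℝ).mpr h)
  have ht0 : liouvilleNumber (2 : ℕ) ≠ 0 := fun h ↦ ht (h ▸ isAlgebraic_zero)
  exact ⟨Units.mk0 _ ht0, ht⟩

theorem stmt_7_general {R : Type*} [CommRing R] [Algebra ℚ R] (t : Rˣ)
    (ht : Transcendental ℚ (t : R)) (n : ℕ) :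
    ∃ φ : BraidGroup n →* Matrix.GeneralLinearGroup (Fin (n * (n - 1) / 2)) R,
      Function.Injective φ := by
  let b : Module.Basis (Fin (n * (n - 1) / 2)) R (StrandPair n → R) :=
    (Pi.basisFun R (StrandPair n)).reindex (Fintype.equivFinOfCardEq (StrandPair.card_eq n))
  let q : ℚˣ := Units.mk0 (1 / 2) (by norm_num)
  have hinj : Function.Injective (krammerRep n (Units.map (algebraMap ℚ R) q) t) :=
    krammerRep_injective (by norm_num [q]) (by norm_num [q]) ht
  exact ⟨(Matrix.GeneralLinearGroup.toLin' b).symm.toMonoidHom.comp (krammerRep n _ t),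
    (Matrix.GeneralLinearGroup.toLin' b).symm.injective.comp hinj⟩

/-- For every `n ≥ 2`, the braid group `B_n` embeds into `GL(n(n-1)/2, ℝ)`. -/
theorem stmt_7 (n : ℕ) (hn : 2 ≤ n) :
    ∃ φ : BraidGroup n →* Matrix.GeneralLinearGroup (Fin (n * (n - 1) / 2)) ℝ,
      Function.Injective φ := by
  obtain ⟨t, ht⟩ := exists_unit_transcendental_rat_real
  exact stmt_7_general t ht n
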